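/- Fix ℏ > 0 and an integer n ≥ 2. Fix γ_n = (γ_{n1},…,γ_{nn}) ∈ ℂ^n and real numbers η_{mj}, 1 ≤ j ≤ m ≤ n−1, with min_{1≤j≤m} η_{mj} > max_{1≤k≤m+1} η_{m+1,k} for every 1 ≤ m ≤ n−1, where η_{nk} := Im γ_{nk}. For 1 ≤ p ≤ n and a top row β = (β_1,…,β_p) ∈ ℂ^p with Im β_k = η_{pk}, let ψ_β(x_1,…,x_p) denote the Mellin–Barnes integral over ξ ∈ ℝ^{p(p−1)/2}: ψ_β(x) = ∫ ∏_{m=1}^{p−1}[∏_{k=1}^{m}∏_{l=1}^{m+1} ℏ^{(γ_{mk} − γ_{m+1,l})/(iℏ)}·Γ((γ_{mk} − γ_{m+1,l})/(iℏ)) / ∏_{s≠t, s,t≤m} Γ((γ_{ms} − γ_{mt})/(iℏ))]·exp((i/ℏ)·Σ_{m=1}^{p}(Σ_j γ_{mj} − Σ_j γ_{m−1,j})·x_m) dξ, where γ_{mj} = ξ_{mj} + iη_{mj} for m ≤ p−1 and the top row γ_p = β. Then the recursive relation holds: ψ_{γ_n}(x_1,…,x_n) = ∫_{ℝ^{n−1}}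 μ^{(n−1)}(γ_{n−1})·f_n(γ_n,γ_{n−1})·exp((i/ℏ)·(Σ_{j=1}^{n} γ_{nj} − Σ_{k=1}^{n−1} γ_{n−1,k})·x_n)·ψ_{γ_{n−1}}(x_1,…,x_{n−1}) dξ_{n−1,1}⋯dξ_{n−1,n−1}, where γ_{n−1,k} = ξ_{n−1,k} + iη_{n−1,k}, μ^{(n−1)}(γ_{n−1}) = ∏_{s≠t, s,t≤n−1} Γ((γ_{n−1,s} − γ_{n−1,t})/(iℏ))^{−1}, and f_n(γ_n,γ_{n−1}) = ∏_{k=1}^{n−1}∏_{m=1}^{n} ℏ^{(γ_{n−1,k} − γ_{nm})/(iℏ)}·Γ((γ_{n−1,k} − γ_{nm})/(iℏ)). -/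

import Mathlib

open Finset MeasureTheory

noncomputable section

/-- A Gelfand–Zetlin array: complex values `γ n j`, relevant for `1 ≤ j ≤ n ≤ N`. -/
abbrev GZ := ℕ → ℕ → ℂ

/-- Index set of the Gelfand–Zetlin variables `(n, j)` with `1 ≤ j ≤ n ≤ N − 1`
(the pair `(p.1, p.2)` encodes `(n, j)`). -/
abbrev GZIdx (N : ℕ) := {p : Fin N × Fin N // 1 ≤ (p.2 : ℕ) ∧ (p.2 : ℕ) ≤ (p.1 : ℕ)}

/-- The Gelfand–Zetlin array on the tube: lower levels `γ_{nj} = ξ_{nj} + iη_{nj}`,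
top row `g`. -/
def gzTube (N : ℕ) (g : ℕ → ℂ) (η : ℕ → ℕ → ℝ) (ξ : GZIdx N → ℝ) : GZ := fun n j =>
  if h : 1 ≤ j ∧ j ≤ n ∧ n < N then
    ((ξ ⟨(⟨n, h.2.2⟩, ⟨j, lt_of_le_of_lt h.2.1 h.2.2⟩), h.1, h.2.1⟩ : ℝ) : ℂ) +
      Complex.I * (η n j : ℂ)
  else g j

/-- `ℏ^z := exp(z log ℏ)`. -/
def hpow (ℏ : ℝ) (z : ℂ) : ℂ := Complex.exp (z * (Real.log ℏ : ℂ))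

/-- The integrand of the Mellin–Barnes representation of the `GL(N,ℝ)` open Toda
chain wave function (`x n` is the Toda variable `x_n`, `1 ≤ n ≤ N`). -/
def todaIntegrand (ℏ : ℝ) (N : ℕ) (x : ℕ → ℝ) (γ : GZ) : ℂ :=
  (∏ n ∈ Icc 1 (N - 1),
    (∏ k ∈ Icc 1 n, ∏ m ∈ Icc 1 (n + 1),
      hpow ℏ ((γ n k - γ (n + 1) m) / (Complex.I * ℏ)) *
        Complex.Gamma ((γ n k - γ (n + 1) m) / (Complex.I * ℏ))) /
      ∏ s ∈ Icc 1 n, ∏ p ∈ (Icc 1 n).erase s,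
        Complex.Gamma ((γ n s - γ n p) / (Complex.I * ℏ))) *
    Complex.exp ((Complex.I / (ℏ : ℂ)) * ∑ n ∈ Icc 1 N,
      ((∑ j ∈ Icc 1 n, γ n j) - ∑ j ∈ Icc 1 (n - 1), γ (n - 1) j) * (x n : ℂ))

/-- The level-`p` Mellin–Barnes wave function with top row `β`
(Im β_k = η_{pk} being implicit in the choice of `β`). -/
def psiMB (ℏ : ℝ) (η : ℕ → ℕ → ℝ) (p : ℕ) (β : ℕ → ℂ) (x : ℕ → ℝ) : ℂ :=
  ∫ ξ : GZIdx p → ℝ, todaIntegrand ℏ p x (gzTube p β η ξ)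

/-!
Splitting the level-`(n - 1)` variables off by Fubini and pulling the factors that depend only on
them out of the inner integral gives the recursion, so everything rests on absolute convergence.

Rotating the ray in Euler's integral gives `|Γ(a + ib)| = O(e^{-(π/2 - δ)|b|})` for fixed `a > 0`,
and the reflection formula gives `1 / (Γ(z) Γ(-z)) = O(e^{(π + δ)|Im z|})`. Up to `δ` the integrand
thus decays with rate `π / (2ℏ)` times the distances between points of adjacent rows minus those
between points of the same row. As `|a - b| = ∫ (1_{a ≤ t} - 1_{b ≤ t})² dt`, for two families of
`m` and `m + 1` points twice the mutual distances minus the self-distances equals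
`∫ 2 d(t) (d(t) + 1) dt`, where the integer `d(t)` is the difference of the numbers of points to the
left of `t`. This is nonnegative, and a point of the lower row at distance `ρ` outside the hull of
the upper row adds at least `4ρ`. Summed over the rows it dominates the norm of the integration
variables.
-/

open Asymptotics Filter

section GammaDecay

lemma norm_cpow_mul_exp_neg_mul (z r : ℂ) {t : ℝ} (ht : 0 < t) :
    ‖(t : ℂ) ^ z * Complex.exp (-(r * t))‖ = t ^ z.re * Real.exp (-(r.re * t)) := by
  simp [Complex.norm_cpow_eq_rpow_re_of_pos ht, Complex.norm_exp]

lemma integrableOn_rpow_mul_exp_neg_mul {s b : ℝ} (hs : -1 < s) (hb : 0 < b) :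
    IntegrableOn (fun t : ℝ => t ^ s * Real.exp (-(b * t))) (Set.Ioi 0) := by
  simpa using integrableOn_rpow_mul_exp_neg_mul_rpow hs one_pos hb

lemma aestronglyMeasurable_cpow_mul_exp_neg_mul (z r : ℂ) :
    AEStronglyMeasurable (fun t : ℝ => (t : ℂ) ^ z * Complex.exp (-(r * t)))
      (volume.restrict (Set.Ioi 0)) := by
  have hcont : ContinuousOn (fun t : ℝ => (t : ℂ) ^ z * Complex.exp (-(r * t))) (Set.Ioi 0) :=
    ContinuousOn.mul
      (fun t ht => (Complex.continuousAt_ofReal_cpow_const t z (.inr ht.ne')).continuousWithinAt)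
      (by fun_prop)
  exact hcont.aestronglyMeasurable measurableSet_Ioi

lemma integrableOn_cpow_mul_exp_neg_mul {z r : ℂ} (hz : -1 < z.re) (hr : 0 < r.re) :
    IntegrableOn (fun t : ℝ => (t : ℂ) ^ z * Complex.exp (-(r * t))) (Set.Ioi 0) := by
  refine (integrableOn_rpow_mul_exp_neg_mul hz hr).mono'
    (aestronglyMeasurable_cpow_mul_exp_neg_mul z r) ?_
  filter_upwards [ae_restrict_mem measurableSet_Ioi] with t ht
  exact (norm_cpow_mul_exp_neg_mul z r ht).le

lemma differentiableOn_integral_cpow_mul_exp_neg_mul {a : ℂ} (ha : 0 < a.re) :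
    DifferentiableOn ℂ
      (fun r : ℂ => ∫ t : ℝ in Set.Ioi 0, (t : ℂ) ^ (a - 1) * Complex.exp (-(r * t)))
      {r | 0 < r.re} := by
  intro r₀ hr₀
  have hr₀' : 0 < r₀.re / 2 := half_pos hr₀
  have re_gt {r : ℂ} (hr : r ∈ Metric.ball r₀ (r₀.re / 2)) : r₀.re / 2 < r.re := by
    have := (Complex.abs_re_le_norm (r - r₀)).trans_lt (mem_ball_iff_norm.mp hr)
    rw [Complex.sub_re, abs_lt] at this
    linarith
  refine (HasDerivAt.differentiableAt (hasDerivAt_integral_of_dominated_loc_of_deriv_le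
    (F' := fun r t => (t : ℂ) ^ (a - 1) * (Complex.exp (-(r * t)) * -t))
    (bound := fun t => t ^ a.re * Real.exp (-(r₀.re / 2 * t)))
    (Metric.ball_mem_nhds r₀ hr₀')
    (Eventually.of_forall fun r => aestronglyMeasurable_cpow_mul_exp_neg_mul (a - 1) r)
    (integrableOn_cpow_mul_exp_neg_mul (by simpa using ha) hr₀) ?_ ?_
    (integrableOn_rpow_mul_exp_neg_mul (by linarith) hr₀') ?_).2).differentiableWithinAt
  · simp_rw [← mul_assoc]
    exact (aestronglyMeasurable_cpow_mul_exp_neg_mul (a - 1) r₀).mul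
      (Continuous.aestronglyMeasurable (by fun_prop))
  · filter_upwards [ae_restrict_mem measurableSet_Ioi] with t (ht : 0 < t) r hr
    rw [← mul_assoc, norm_mul, norm_cpow_mul_exp_neg_mul _ _ ht, norm_neg, Complex.norm_real,
      Real.norm_of_nonneg ht.le, mul_right_comm, ← Real.rpow_add_one ht.ne', Complex.sub_re,
      Complex.one_re, sub_add_cancel]
    gcongr
    exact (re_gt hr).le
  · refine Eventually.of_forall fun t r _ => ?_
    simpa using ((hasDerivAt_mul_const (t : ℂ)).neg.cexp).const_mul ((t : ℂ) ^ (a - 1))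

/-- By analytic continuation in `r` from the positive reals. -/
theorem integral_cpow_mul_exp_neg_mul_Ioi_of_re_pos {a r : ℂ} (ha : 0 < a.re) (hr : 0 < r.re) :
    ∫ t : ℝ in Set.Ioi 0, (t : ℂ) ^ (a - 1) * Complex.exp (-(r * t)) =
      (1 / r) ^ a * Complex.Gamma a := by
  have hopen : IsOpen {r : ℂ | 0 < r.re} := isOpen_lt continuous_const Complex.continuous_re
  have hpow : DifferentiableOn ℂ (fun r : ℂ => (1 / r) ^ a * Complex.Gamma a) {r | 0 < r.re} := by
    intro r (hr : 0 < r.re)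
    have hr0 : r ≠ 0 := fun h => by simp [h] at hr
    have hmem : 1 / r ∈ Complex.slitPlane := by
      refine .inl ?_
      rw [one_div, Complex.inv_re]
      exact div_pos hr (Complex.normSq_pos.mpr hr0)
    exact (((differentiableAt_const 1).div differentiableAt_id hr0).cpow_const hmem
      |>.mul_const _).differentiableWithinAt
  refine ((differentiableOn_integral_cpow_mul_exp_neg_mul ha).analyticOnNhd hopen
    |>.eqOn_of_preconnected_of_frequently_eq (hpow.analyticOnNhd hopen)
      (convex_halfSpace_re_gt 0).isPreconnected (z₀ := 1) (by simp) ?_) hr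
  have hlim : Tendsto (fun s : ℝ => (s : ℂ)) (nhdsWithin 1 {1}ᶜ) (nhdsWithin 1 {1}ᶜ) :=
    tendsto_nhdsWithin_iff.mpr ⟨Complex.continuous_ofReal.tendsto' 1 1 (by simp) |>.mono_left
      nhdsWithin_le_nhds, by
        filter_upwards [self_mem_nhdsWithin] with s hs
        simpa using hs⟩
  refine hlim.frequently (Eventually.frequently ?_)
  filter_upwards [nhdsWithin_le_nhds (lt_mem_nhds one_pos)] with s hs
  exact Complex.integral_cpow_mul_exp_neg_mul_Ioi ha hs

/-- Rotating the ray of integration in Euler's integral by the angle `θ`. -/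
theorem norm_Gamma_le_mul_exp {z : ℂ} (hz : 0 < z.re) {θ : ℝ} (hθ : |θ| < Real.pi / 2) :
    ‖Complex.Gamma z‖ ≤
      (1 / Real.cos θ) ^ z.re * Real.Gamma z.re * Real.exp (-(θ * z.im)) := by
  obtain ⟨hθ₁, hθ₂⟩ := abs_lt.mp hθ
  have hcos : 0 < Real.cos θ := Real.cos_pos_of_mem_Ioo ⟨hθ₁, hθ₂⟩
  set r : ℂ := Complex.exp (θ * Complex.I) with hr
  have hre : r.re = Real.cos θ := by simp [hr, Complex.exp_re]
  have hpow : ‖(1 / r) ^ z‖ = Real.exp (θ * z.im) := by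
    have : 1 / r = Complex.exp (-(θ * Complex.I)) := by simp [hr, Complex.exp_neg]
    rw [this, Complex.cpow_def_of_ne_zero (Complex.exp_ne_zero _), Complex.log_exp,
      Complex.norm_exp]
    · simp
    · simpa using by linarith
    · simpa using by linarith
  have hint : ‖(1 / r) ^ z * Complex.Gamma z‖ ≤ (1 / Real.cos θ) ^ z.re * Real.Gamma z.re := by
    rw [← integral_cpow_mul_exp_neg_mul_Ioi_of_re_pos hz (hre ▸ hcos),
      ← Real.integral_rpow_mul_exp_neg_mul_Ioi hz hcos]
    refine (norm_integral_le_integral_norm _).trans_eq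
      (setIntegral_congr_fun measurableSet_Ioi fun t ht => ?_)
    rw [norm_cpow_mul_exp_neg_mul _ _ ht, hre, Complex.sub_re, Complex.one_re]
  rw [norm_mul, hpow] at hint
  rwa [Real.exp_neg, ← div_eq_mul_inv, le_div_iff₀' (Real.exp_pos _)]

lemma norm_Gamma_le_mul_exp_abs {z : ℂ} (hz : 0 < z.re) {θ : ℝ} (hθ : |θ| < Real.pi / 2) :
    ‖Complex.Gamma z‖ ≤
      (1 / Real.cos θ) ^ z.re * Real.Gamma z.re * Real.exp (-(θ * |z.im|)) := by
  rcases abs_cases z.im with ⟨him, -⟩ | ⟨him, -⟩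
  · rw [him]
    exact norm_Gamma_le_mul_exp hz hθ
  · have := norm_Gamma_le_mul_exp hz (θ := -θ) (by rwa [abs_neg])
    rwa [Real.cos_neg, neg_mul_comm, ← him] at this

variable {Ω : Type*} {l : Filter Ω} {z : Ω → ℂ} {c δ : ℝ}

theorem isBigO_Gamma_of_re_eq (hc : 0 < c) (hz : ∀ ω, (z ω).re = c) (hδ : 0 < δ)
    (hδ' : δ < Real.pi) :
    (fun ω => Complex.Gamma (z ω)) =O[l]
      fun ω => Real.exp (-(Real.pi / 2 - δ) * |(z ω).im|) := by
  refine .of_bound ((1 / Real.cos (Real.pi / 2 - δ)) ^ c * Real.Gamma c) (.of_forall fun ω => ?_)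
  have hθ : |Real.pi / 2 - δ| < Real.pi / 2 := abs_lt.mpr ⟨by linarith, by linarith⟩
  have hbound := norm_Gamma_le_mul_exp_abs (hz ω ▸ hc) hθ
  rwa [hz ω, ← neg_mul, ← Real.norm_of_nonneg (Real.exp_pos (_ * _)).le] at hbound

lemma inv_Gamma_mul_inv_Gamma_neg (z : ℂ) :
    (Complex.Gamma z)⁻¹ * (Complex.Gamma (-z))⁻¹ =
      -z * Complex.sin (Real.pi * z) / Real.pi := by
  have hshift := Complex.one_div_Gamma_eq_self_mul_one_div_Gamma_add_one (-z)
  rw [hshift, mul_left_comm, ← mul_inv, neg_add_eq_sub, Complex.Gamma_mul_Gamma_one_sub, inv_div,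
    mul_div_assoc]

lemma norm_sin_le_exp_abs_im (z : ℂ) : ‖Complex.sin z‖ ≤ Real.exp |z.im| := by
  have hpos : ‖Complex.exp (z * Complex.I)‖ ≤ Real.exp |z.im| := by
    simpa [Complex.norm_exp] using neg_le_abs z.im
  have hneg : ‖Complex.exp (-z * Complex.I)‖ ≤ Real.exp |z.im| := by
    simpa [Complex.norm_exp] using le_abs_self z.im
  have := norm_sub_le (Complex.exp (-z * Complex.I)) (Complex.exp (z * Complex.I))
  rw [Complex.sin, norm_div, norm_mul, Complex.norm_I, mul_one, Complex.norm_ofNat]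
  linarith

lemma isBigO_self_of_re_eq (hz : ∀ ω, (z ω).re = c) (hδ : 0 < δ) :
    z =O[l] fun ω => Real.exp (δ * |(z ω).im|) := by
  refine .of_bound (|c| + δ⁻¹) (.of_forall fun ω => ?_)
  have hone : 1 ≤ Real.exp (δ * |(z ω).im|) := Real.one_le_exp (by positivity)
  have hlin : |(z ω).im| ≤ δ⁻¹ * Real.exp (δ * |(z ω).im|) := by
    rw [← div_eq_inv_mul, le_div_iff₀' hδ]
    linarith [Real.add_one_le_exp (δ * |(z ω).im|)]
  calc ‖z ω‖ ≤ |c| + |(z ω).im| := hz ω ▸ Complex.norm_le_abs_re_add_abs_im (z ω)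
    _ ≤ |c| * Real.exp (δ * |(z ω).im|) + δ⁻¹ * Real.exp (δ * |(z ω).im|) :=
      add_le_add (le_mul_of_one_le_right (abs_nonneg c) hone) hlin
    _ = (|c| + δ⁻¹) * ‖Real.exp (δ * |(z ω).im|)‖ := by
      rw [Real.norm_of_nonneg (Real.exp_pos _).le, add_mul]

theorem isBigO_inv_Gamma_mul_inv_Gamma_neg (hz : ∀ ω, (z ω).re = c) (hδ : 0 < δ) :
    (fun ω => (Complex.Gamma (z ω))⁻¹ * (Complex.Gamma (-z ω))⁻¹) =O[l]
      fun ω => Real.exp ((Real.pi + δ) * |(z ω).im|) := by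
  have hsin : (fun ω => Complex.sin (Real.pi * z ω)) =O[l]
      fun ω => Real.exp (Real.pi * |(z ω).im|) := by
    refine .of_norm_le fun ω => (norm_sin_le_exp_abs_im _).trans_eq ?_
    simp [abs_mul, abs_of_pos Real.pi_pos]
  simp_rw [inv_Gamma_mul_inv_Gamma_neg, div_eq_mul_inv, mul_comm _ (Real.pi : ℂ)⁻¹]
  refine (((isBigO_self_of_re_eq hz hδ).neg_left.mul hsin).const_mul_left _).congr_right fun ω => ?_
  rw [← Real.exp_add]
  ring_nf

end GammaDecay

section Energy

/-- The Heaviside function `t ↦ 1_{a ≤ t}`; the `L²` distance of two such functions is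
`|a - b|^{1/2}`, which turns sums of distances into integrals of squares. -/
def heaviside (a t : ℝ) : ℝ := if a ≤ t then 1 else 0

lemma heaviside_sub_sq_eq_indicator (a b : ℝ) :
    (fun t => (heaviside a t - heaviside b t) ^ 2) =
      (Set.Ico (min a b) (max a b)).indicator fun _ => (1 : ℝ) := by
  funext t
  simp only [heaviside, Set.indicator, Set.mem_Ico, min_le_iff, lt_max_iff]
  grind

lemma integrable_heaviside_sub_sq (a b : ℝ) :
    Integrable fun t => (heaviside a t - heaviside b t) ^ 2 := by
  rw [heaviside_sub_sq_eq_indicator, integrable_indicator_iff measurableSet_Ico]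
  simp

lemma integral_heaviside_sub_sq (a b : ℝ) :
    ∫ t, (heaviside a t - heaviside b t) ^ 2 = |a - b| := by
  rw [heaviside_sub_sq_eq_indicator, integral_indicator measurableSet_Ico, ← max_sub_min_eq_abs']
  simp

variable {α β : Type*} (A : Finset α) (B : Finset β) (a : α → ℝ) (b : β → ℝ)

/-- The mutual energy of two finite families of points on the line for the kernel `|x - y|`. -/
def pairEnergy : ℝ := ∑ i ∈ A, ∑ j ∈ B, |a i - b j|

lemma pairEnergy_nonneg : 0 ≤ pairEnergy A B a b :=
  sum_nonneg fun _ _ => sum_nonneg fun _ _ => abs_nonneg _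

lemma pairEnergy_le {A : Finset α} {B : Finset β} {a : α → ℝ} {b : β → ℝ} {ρ : ℝ}
    (ha : ∀ i ∈ A, |a i| ≤ ρ) (hb : ∀ j ∈ B, |b j| ≤ ρ) :
    pairEnergy A B a b ≤ 2 * (#A * #B) * ρ := by
  calc pairEnergy A B a b ≤ ∑ _ ∈ A, ∑ _ ∈ B, (ρ + ρ) :=
        sum_le_sum fun i hi => sum_le_sum fun j hj =>
          (abs_sub _ _).trans (add_le_add (ha i hi) (hb j hj))
    _ = 2 * (#A * #B) * ρ := by
        simp only [sum_const, nsmul_eq_mul]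
        ring

lemma integrable_sum_heaviside_sub_sq :
    Integrable fun t => ∑ i ∈ A, ∑ j ∈ B, (heaviside (a i) t - heaviside (b j) t) ^ 2 :=
  integrable_finsetSum _ fun _ _ => integrable_finsetSum _ fun _ _ =>
    integrable_heaviside_sub_sq _ _

lemma pairEnergy_eq_integral :
    pairEnergy A B a b =
      ∫ t, ∑ i ∈ A, ∑ j ∈ B, (heaviside (a i) t - heaviside (b j) t) ^ 2 := by
  rw [integral_finsetSum _ fun _ _ => integrable_finsetSum _ fun _ _ =>
    integrable_heaviside_sub_sq _ _]
  simp_rw [integral_finsetSum _ fun _ _ => integrable_heaviside_sub_sq _ _,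
    integral_heaviside_sub_sq, pairEnergy]

/-- Twice the mutual energy of two families minus both self-energies. -/
def energyGap : ℝ := 2 * pairEnergy A B a b - pairEnergy A A a a - pairEnergy B B b b

/-- The excess, among the points to the left of `t`, of the first family over the second. -/
def countDiff (t : ℝ) : ℤ := #{i ∈ A | a i ≤ t} - #{j ∈ B | b j ≤ t}

/-- The integrand whose integral over the line is `energyGap`. -/
def gapDensity (t : ℝ) : ℝ :=
  2 * (countDiff A B a b t * (countDiff A B a b t + (#B - #A)))

lemma sum_heaviside (t : ℝ) : ∑ i ∈ A, heaviside (a i) t = #{i ∈ A | a i ≤ t} := sum_boole _ _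

lemma sum_heaviside_sub_sq_eq (t : ℝ) :
    ∑ i ∈ A, ∑ j ∈ B, (heaviside (a i) t - heaviside (b j) t) ^ 2 =
      #B * #{i ∈ A | a i ≤ t} + #A * #{j ∈ B | b j ≤ t} -
        2 * #{i ∈ A | a i ≤ t} * #{j ∈ B | b j ≤ t} := by
  have sq_heaviside (x : ℝ) : heaviside x t ^ 2 = heaviside x t := by
    unfold heaviside
    split_ifs <;> norm_num
  simp only [sub_sq, sq_heaviside, sum_add_distrib, sum_sub_distrib, sum_const, ← mul_sum,
    ← sum_mul, sum_heaviside, nsmul_eq_mul]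
  ring

lemma gapDensity_eq_sum_heaviside_sub_sq :
    gapDensity A B a b =
      (fun t => 2 * ∑ i ∈ A, ∑ j ∈ B, (heaviside (a i) t - heaviside (b j) t) ^ 2) -
        (fun t => ∑ i ∈ A, ∑ j ∈ A, (heaviside (a i) t - heaviside (a j) t) ^ 2) -
        fun t => ∑ i ∈ B, ∑ j ∈ B, (heaviside (b i) t - heaviside (b j) t) ^ 2 := by
  funext t
  simp only [Pi.sub_apply, sum_heaviside_sub_sq_eq, gapDensity, countDiff]
  push_cast
  ring

lemma integrable_gapDensity : Integrable (gapDensity A B a b) := by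
  rw [gapDensity_eq_sum_heaviside_sub_sq]
  exact (((integrable_sum_heaviside_sub_sq A B a b).const_mul 2).sub
    (integrable_sum_heaviside_sub_sq A A a a)).sub (integrable_sum_heaviside_sub_sq B B b b)

theorem energyGap_eq_integral_gapDensity :
    energyGap A B a b = ∫ t, gapDensity A B a b t := by
  have hAB := (integrable_sum_heaviside_sub_sq A B a b).const_mul 2
  have hA := integrable_sum_heaviside_sub_sq A A a a
  have hB := integrable_sum_heaviside_sub_sq B B b b
  rw [gapDensity_eq_sum_heaviside_sub_sq, integral_sub' (hAB.sub hA) hB, integral_sub' hAB hA,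
    integral_const_mul]
  simp_rw [energyGap, pairEnergy_eq_integral]

variable {A B a b}

lemma gapDensity_of_card (hcard : #B = #A + 1) (t : ℝ) :
    gapDensity A B a b t = 2 * (countDiff A B a b t * (countDiff A B a b t + 1) : ℤ) := by
  simp [gapDensity, hcard]

lemma gapDensity_nonneg (hcard : #B = #A + 1) (t : ℝ) : 0 ≤ gapDensity A B a b t := by
  rw [gapDensity_of_card hcard]
  refine mul_nonneg zero_le_two (Int.cast_nonneg ?_)
  rcases le_or_gt 0 (countDiff A B a b t) with h | h <;> nlinarith

lemma energyGap_nonneg (hcard : #B = #A + 1) : 0 ≤ energyGap A B a b := by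
  rw [energyGap_eq_integral_gapDensity]
  exact integral_nonneg (gapDensity_nonneg hcard)

lemma four_le_gapDensity (hcard : #B = #A + 1) {t : ℝ}
    (hcount : countDiff A B a b t ≤ -2 ∨ 1 ≤ countDiff A B a b t) :
    4 ≤ gapDensity A B a b t := by
  have hprod : 2 ≤ countDiff A B a b t * (countDiff A B a b t + 1) := by
    rcases hcount with h | h <;> nlinarith
  have hprod' : (2 : ℝ) ≤ (countDiff A B a b t * (countDiff A B a b t + 1) : ℤ) := by
    exact_mod_cast hprod
  rw [gapDensity_of_card hcard]
  linarith

lemma four_mul_sub_le_energyGap (hcard : #B = #A + 1) {u v : ℝ} (huv : u ≤ v)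
    (hcount : ∀ t ∈ Set.Ico u v, countDiff A B a b t ≤ -2 ∨ 1 ≤ countDiff A B a b t) :
    4 * (v - u) ≤ energyGap A B a b := by
  have hint := integrable_gapDensity A B a b
  calc 4 * (v - u) = ∫ _ in Set.Ico u v, (4 : ℝ) := by simp [huv, mul_comm]
    _ ≤ ∫ t in Set.Ico u v, gapDensity A B a b t :=
        setIntegral_mono_on (by simp) hint.integrableOn measurableSet_Ico
          fun t ht => four_le_gapDensity hcard (hcount t ht)
    _ ≤ ∫ t, gapDensity A B a b t :=
        setIntegral_le_integral hint (.of_forall (gapDensity_nonneg hcard))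
    _ = energyGap A B a b := (energyGap_eq_integral_gapDensity A B a b).symm

lemma countDiff_le_neg_two (hcard : #B = #A + 1) {t : ℝ} (hb : ∀ j ∈ B, b j ≤ t) {i : α}
    (hi : i ∈ A) (ht : t < a i) : countDiff A B a b t ≤ -2 := by
  have hB : #{j ∈ B | b j ≤ t} = #B := by rw [filter_true_of_mem hb]
  have hA : #{i ∈ A | a i ≤ t} < #A :=
    card_lt_card (filter_ssubset.mpr ⟨i, hi, ht.not_ge⟩)
  rw [countDiff]
  omega

lemma one_le_countDiff {t : ℝ} (hb : ∀ j ∈ B, t < b j) {i : α} (hi : i ∈ A) (ht : a i ≤ t) :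
    1 ≤ countDiff A B a b t := by
  have hB : #{j ∈ B | b j ≤ t} = 0 := by
    rw [card_eq_zero, filter_false_of_mem fun j hj => (hb j hj).not_ge]
  have hA : 0 < #{i ∈ A | a i ≤ t} := card_pos.mpr ⟨i, mem_filter.mpr ⟨hi, ht⟩⟩
  rw [countDiff]
  omega

theorem four_mul_abs_sub_le_energyGap (hcard : #B = #A + 1) {R : ℝ} (hb : ∀ j ∈ B, |b j| ≤ R)
    {i : α} (hi : i ∈ A) : 4 * (|a i| - R) ≤ energyGap A B a b := by
  rcases le_or_gt |a i| R with hle | hlt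
  · linarith [energyGap_nonneg (a := a) (b := b) hcard]
  rcases abs_cases (a i) with ⟨hright, -⟩ | ⟨hleft, -⟩
  · rw [hright] at hlt ⊢
    exact four_mul_sub_le_energyGap hcard hlt.le fun t ht => .inl <|
      countDiff_le_neg_two hcard (fun j hj => (le_of_abs_le (hb j hj)).trans ht.1) hi ht.2
  · rw [hleft] at hlt
    rw [hleft, neg_sub_comm]
    exact four_mul_sub_le_energyGap hcard (by linarith) fun t ht => .inr <|
      one_le_countDiff (fun j hj => ht.2.trans_le (neg_le_of_abs_le (hb j hj))) hi ht.1

end Energy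

section TriangularEnergy

variable (X : ℕ → ℕ → ℝ) (N : ℕ)

/-- The energy between rows `m` and `m + 1` of a triangular array with rows `(X m j)_{1 ≤ j ≤ m}`;
it governs the decay of the numerator Gamma factors of level `m`. -/
def crossEnergy (m : ℕ) : ℝ := pairEnergy (Icc 1 m) (Icc 1 (m + 1)) (X m) (X (m + 1))

/-- The energy of row `m` of a triangular array with itself; it governs the growth of the
denominator Gamma factors of level `m`. -/
def selfEnergy (m : ℕ) : ℝ := pairEnergy (Icc 1 m) (Icc 1 m) (X m) (X m)

/-- The gap between the energies of rows `m` and `m + 1` of a triangular array. -/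
def rowGap (m : ℕ) : ℝ := energyGap (Icc 1 m) (Icc 1 (m + 1)) (X m) (X (m + 1))

/-- The decay minus the growth exponent, in units of `π / (2ℏ)`, of the Mellin–Barnes integrand
of the levels below `N`. -/
def netEnergy : ℝ := ∑ m ∈ range N, (crossEnergy X m - selfEnergy X m)

lemma rowGap_eq (m : ℕ) :
    rowGap X m = 2 * crossEnergy X m - selfEnergy X m - selfEnergy X (m + 1) := rfl

lemma rowGap_nonneg (m : ℕ) : 0 ≤ rowGap X m := energyGap_nonneg (by simp)

lemma selfEnergy_nonneg (m : ℕ) : 0 ≤ selfEnergy X m := pairEnergy_nonneg _ _ _ _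

lemma sum_rowGap_le_two_mul_netEnergy : ∑ m ∈ range N, rowGap X m ≤ 2 * netEnergy X N := by
  have hzero : selfEnergy X 0 = 0 := by simp [selfEnergy, pairEnergy]
  have htele : ∑ m ∈ range N, rowGap X m = 2 * netEnergy X N - selfEnergy X N := by
    rw [← sub_zero (selfEnergy X N), ← hzero, ← sum_range_sub, netEnergy, mul_sum,
      ← sum_sub_distrib]
    refine sum_congr rfl fun m _ => ?_
    rw [rowGap_eq]
    ring
  linarith [selfEnergy_nonneg X N]

lemma netEnergy_nonneg : 0 ≤ netEnergy X N := by
  linarith [sum_rowGap_le_two_mul_netEnergy X N,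
    sum_nonneg fun m (_ : m ∈ range N) => rowGap_nonneg X m]

variable {X N} {R : ℝ}

lemma abs_le_add_sum_rowGap (hR : ∀ k ∈ Icc 1 N, |X N k| ≤ R) {m : ℕ} (hm : m ≤ N) :
    ∀ k ∈ Icc 1 m, |X m k| ≤ R + (∑ r ∈ Ico m N, rowGap X r) / 4 := by
  induction hm using Nat.decreasingInduction with
  | self => simpa using hR
  | of_succ m hm ih =>
    intro k hk
    have hgap : 4 * (|X m k| - _) ≤ rowGap X m := four_mul_abs_sub_le_energyGap (by simp) ih hk
    rw [sum_eq_sum_Ico_succ_bot hm]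
    linarith

theorem abs_le_add_half_netEnergy (hR : ∀ k ∈ Icc 1 N, |X N k| ≤ R) {m k : ℕ} (hm : m ≤ N)
    (hk : k ∈ Icc 1 m) :
    |X m k| ≤ R + netEnergy X N / 2 := by
  have hsub : ∑ r ∈ Ico m N, rowGap X r ≤ ∑ r ∈ range N, rowGap X r :=
    sum_le_sum_of_subset_of_nonneg (fun r hr => mem_range.mpr (mem_Ico.mp hr).2)
      fun r _ _ => rowGap_nonneg X r
  linarith [abs_le_add_sum_rowGap hR hm k hk, sum_rowGap_le_two_mul_netEnergy X N]

lemma sum_crossEnergy_add_selfEnergy_le {ρ : ℝ}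
    (hρ : ∀ m ≤ N, ∀ k ∈ Icc 1 m, |X m k| ≤ ρ) :
    ∑ m ∈ range N, (crossEnergy X m + selfEnergy X m) ≤
      (∑ m ∈ range N, 2 * (m * (2 * m + 1)) : ℕ) * ρ := by
  rw [Nat.cast_sum, sum_mul]
  refine sum_le_sum fun m hm => ?_
  have hm : m + 1 ≤ N := mem_range.mp hm
  have hrow := hρ m (by omega)
  have hcross : crossEnergy X m ≤ _ := pairEnergy_le hrow (hρ (m + 1) hm)
  have hself : selfEnergy X m ≤ _ := pairEnergy_le hrow hrow
  simp only [Nat.card_Icc, Nat.add_sub_cancel] at hcross hself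
  push_cast at hcross ⊢
  linarith

variable (N) in
theorem exists_weighted_energy_le (hR : 0 ≤ R) :
    ∃ δ > 0, δ < Real.pi ∧ ∀ X : ℕ → ℕ → ℝ, (∀ k ∈ Icc 1 N, |X N k| ≤ R) →
      ∑ m ∈ range N, (-(Real.pi / 2 - δ) * crossEnergy X m +
        (Real.pi / 2 + δ) * selfEnergy X m) ≤ R - netEnergy X N := by
  set K : ℕ := ∑ m ∈ range N, 2 * (m * (2 * m + 1))
  have hK : (0 : ℝ) < K + 1 := by positivity
  refine ⟨1 / (K + 1), by positivity, ?_, fun X hX => ?_⟩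
  · exact ((div_le_one hK).mpr (by simp)).trans_lt (by linarith [Real.pi_gt_three])
  have htotal := sum_crossEnergy_add_selfEnergy_le fun m hm k hk =>
    abs_le_add_half_netEnergy hX hm hk
  have hnet := netEnergy_nonneg X N
  have hsplit : ∑ m ∈ range N, (-(Real.pi / 2 - 1 / (K + 1)) * crossEnergy X m +
        (Real.pi / 2 + 1 / (K + 1)) * selfEnergy X m) =
      1 / (K + 1) * ∑ m ∈ range N, (crossEnergy X m + selfEnergy X m) -
        Real.pi / 2 * netEnergy X N := by
    rw [netEnergy, mul_sum, mul_sum, ← sum_sub_distrib]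
    exact sum_congr rfl fun m _ => by ring
  have herror : 1 / (K + 1) * ∑ m ∈ range N, (crossEnergy X m + selfEnergy X m) ≤
      R + netEnergy X N / 2 := by
    rw [one_div_mul_eq_div, div_le_iff₀ hK]
    exact htotal.trans (by nlinarith)
  nlinarith [Real.pi_gt_three]

end TriangularEnergy

lemma integrable_exp_neg_mul_norm {E : Type*} [NormedAddCommGroup E] [NormedSpace ℝ E]
    [FiniteDimensional ℝ E] [MeasurableSpace E] [BorelSpace E] (μ : Measure E)
    [μ.IsAddHaarMeasure] {c : ℝ} (hc : 0 < c) :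
    Integrable (fun x : E => Real.exp (-c * ‖x‖)) μ := by
  have : ProperSpace E := FiniteDimensional.proper ℝ E
  set r : ℝ := Module.finrank ℝ E + 1
  have hlim : Tendsto (fun x : E => 1 + ‖x‖) (cocompact E) atTop :=
    tendsto_atTop_add_const_left _ 1 (tendsto_norm_cocompact_atTop)
  have hdecay : (fun x : E => Real.exp (-c * ‖x‖)) =O[cocompact E] fun x => (1 + ‖x‖) ^ (-r) := by
    have := ((isLittleO_exp_neg_mul_rpow_atTop hc (-r)).comp_tendsto hlim).isBigO
    refine (this.const_mul_left (Real.exp c)).congr_left fun x => ?_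
    rw [Function.comp_apply, ← Real.exp_add]
    ring_nf
  have hcont : Continuous fun x : E => Real.exp (-c * ‖x‖) := by fun_prop
  exact hcont.locallyIntegrable.integrable_of_isBigO_cocompact hdecay
    ((integrable_one_add_norm (lt_add_one _)).integrableAtFilter _)

section LevelFactor

variable (ℏ : ℝ)

/-- The Sklyanin measure density `μ(b) = ∏_{s ≠ t} Γ((b_s - b_t)/(iℏ))⁻¹` of the paper. -/
def sklyaninDensity {ι : Type*} [DecidableEq ι] (A : Finset ι) (b : ι → ℂ) : ℂ :=
  ∏ s ∈ A, ∏ t ∈ A.erase s, (Complex.Gamma ((b s - b t) / (Complex.I * ℏ)))⁻¹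

/-- The kernel `f(a, b) = ∏_{k, l} ℏ^{(b_k - a_l)/(iℏ)} Γ((b_k - a_l)/(iℏ))` of the paper. -/
def barnesKernel {ι κ : Type*} (A : Finset ι) (B : Finset κ) (a : κ → ℂ) (b : ι → ℂ) : ℂ :=
  ∏ k ∈ A, ∏ l ∈ B, hpow ℏ ((b k - a l) / (Complex.I * ℏ)) *
    Complex.Gamma ((b k - a l) / (Complex.I * ℏ))

/-- The factor that passing from row `b` of length `m` to row `a` of length `m + 1` contributes to
the Mellin–Barnes integrand; `y` is the Toda variable `x_{m + 1}`. -/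
def levelFactor (m : ℕ) (y : ℝ) (a b : ℕ → ℂ) : ℂ :=
  sklyaninDensity ℏ (Icc 1 m) b * barnesKernel ℏ (Icc 1 m) (Icc 1 (m + 1)) a b *
    Complex.exp ((Complex.I / (ℏ : ℂ)) * ((∑ j ∈ Icc 1 (m + 1), a j) - ∑ k ∈ Icc 1 m, b k) * y)

lemma levelFactor_congr {m : ℕ} {a a' b b' : ℕ → ℂ} (y : ℝ) (ha : ∀ j ∈ Icc 1 (m + 1), a j = a' j)
    (hb : ∀ k ∈ Icc 1 m, b k = b' k) : levelFactor ℏ m y a b = levelFactor ℏ m y a' b' := by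
  unfold levelFactor sklyaninDensity barnesKernel
  congr! 2
  · refine prod_congr rfl fun s hs => prod_congr rfl fun t ht => ?_
    rw [hb s hs, hb t (mem_of_mem_erase ht)]
  · refine prod_congr rfl fun k hk => prod_congr rfl fun l hl => ?_
    rw [hb k hk, ha l hl]
  · rw [sum_congr rfl ha, sum_congr rfl hb]

lemma todaIntegrand_succ (m : ℕ) (x : ℕ → ℝ) (γ : GZ) :
    todaIntegrand ℏ (m + 1) x γ =
      levelFactor ℏ m (x (m + 1)) (γ (m + 1)) (γ m) * todaIntegrand ℏ m x γ := by
  have hexp : Complex.exp ((Complex.I / (ℏ : ℂ)) * ∑ n ∈ Icc 1 (m + 1),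
        ((∑ j ∈ Icc 1 n, γ n j) - ∑ j ∈ Icc 1 (n - 1), γ (n - 1) j) * (x n : ℂ)) =
      Complex.exp ((Complex.I / (ℏ : ℂ)) * ∑ n ∈ Icc 1 m,
        ((∑ j ∈ Icc 1 n, γ n j) - ∑ j ∈ Icc 1 (n - 1), γ (n - 1) j) * (x n : ℂ)) *
      Complex.exp ((Complex.I / (ℏ : ℂ)) *
        ((∑ j ∈ Icc 1 (m + 1), γ (m + 1) j) - ∑ j ∈ Icc 1 m, γ m j) * (x (m + 1) : ℂ)) := by
    rw [sum_Icc_succ_top (by simp), mul_add, Complex.exp_add, ← mul_assoc, Nat.add_sub_cancel]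
  unfold todaIntegrand levelFactor sklyaninDensity barnesKernel
  rw [hexp, Nat.add_sub_cancel]
  rcases m with - | m
  · simp
  · rw [prod_Icc_succ_top (by simp), Nat.add_sub_cancel]
    simp only [prod_inv_distrib, div_eq_mul_inv]
    ring

lemma todaIntegrand_eq_prod (N : ℕ) (x : ℕ → ℝ) (γ : GZ) :
    todaIntegrand ℏ N x γ =
      ∏ m ∈ range N, levelFactor ℏ m (x (m + 1)) (γ (m + 1)) (γ m) := by
  induction N with
  | zero => simp [todaIntegrand]
  | succ N ih => rw [todaIntegrand_succ, ih, prod_range_succ, mul_comm]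

lemma todaIntegrand_congr {N : ℕ} {γ γ' : GZ} (x : ℕ → ℝ)
    (h : ∀ m ≤ N, ∀ j ∈ Icc 1 m, γ m j = γ' m j) :
    todaIntegrand ℏ N x γ = todaIntegrand ℏ N x γ' := by
  rw [todaIntegrand_eq_prod, todaIntegrand_eq_prod]
  refine prod_congr rfl fun m hm => ?_
  have hm := mem_range.mp hm
  exact levelFactor_congr ℏ _ (h (m + 1) hm) (h m hm.le)

variable {ℏ}

lemma div_I_mul_re (w : ℂ) : (w / (Complex.I * ℏ)).re = w.im / ℏ := by
  rw [div_mul_eq_div_div, Complex.div_I, Complex.div_ofReal_re]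
  simp

lemma div_I_mul_im (w : ℂ) : (w / (Complex.I * ℏ)).im = -(w.re / ℏ) := by
  rw [div_mul_eq_div_div, Complex.div_I, Complex.div_ofReal_im]
  simp [neg_div]

lemma abs_div_I_mul_im (hℏ : 0 < ℏ) (w : ℂ) : |(w / (Complex.I * ℏ)).im| = |w.re| / ℏ := by
  rw [div_I_mul_im, abs_neg, abs_div, abs_of_pos hℏ]

lemma norm_hpow (z : ℂ) : ‖hpow ℏ z‖ = Real.exp (z.re * Real.log ℏ) := by
  simp [hpow, Complex.norm_exp]

section Growth

variable {Ω ι κ : Type*} {l : Filter Ω} {A : Finset ι} {B : Finset κ} {a : Ω → κ → ℂ}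
  {b : Ω → ι → ℂ} {p : κ → ℝ} {q : ι → ℝ} {δ : ℝ}

theorem isBigO_barnesKernel (hℏ : 0 < ℏ) (ha : ∀ ω, ∀ j ∈ B, (a ω j).im = p j)
    (hb : ∀ ω, ∀ i ∈ A, (b ω i).im = q i) (hpq : ∀ i ∈ A, ∀ j ∈ B, p j < q i)
    (hδ : 0 < δ) (hδ' : δ < Real.pi) :
    (fun ω => barnesKernel ℏ A B (a ω) (b ω)) =O[l] fun ω => Real.exp
      (-(Real.pi / 2 - δ) * pairEnergy A B (fun i => (b ω i).re) (fun j => (a ω j).re) / ℏ) := by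
  have hterm : ∀ i ∈ A, ∀ j ∈ B, (fun ω => hpow ℏ ((b ω i - a ω j) / (Complex.I * ℏ)) *
      Complex.Gamma ((b ω i - a ω j) / (Complex.I * ℏ))) =O[l]
      fun ω => Real.exp (-(Real.pi / 2 - δ) * |(b ω i).re - (a ω j).re| / ℏ) := by
    intro i hi j hj
    have hre (ω : Ω) : ((b ω i - a ω j) / (Complex.I * ℏ)).re = (q i - p j) / ℏ := by
      rw [div_I_mul_re, Complex.sub_im, hb ω i hi, ha ω j hj]
    have hhpow : (fun ω => hpow ℏ ((b ω i - a ω j) / (Complex.I * ℏ))) =O[l]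
        fun _ => (1 : ℝ) := by
      refine .of_bound (Real.exp ((q i - p j) / ℏ * Real.log ℏ)) (.of_forall fun ω => ?_)
      rw [norm_hpow, hre, norm_one, mul_one]
    have hGamma := isBigO_Gamma_of_re_eq (l := l) (div_pos (sub_pos.mpr (hpq i hi j hj)) hℏ) hre
      hδ hδ'
    refine (hhpow.mul hGamma).congr_right fun ω => ?_
    rw [one_mul, abs_div_I_mul_im hℏ, Complex.sub_re, mul_div_assoc]
  refine (IsBigO.finsetProd fun i hi => IsBigO.finsetProd (hterm i hi)).congr_right fun ω => ?_
  simp only [← Real.exp_sum, pairEnergy, mul_sum, sum_div]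

variable [DecidableEq ι]

lemma sklyaninDensity_sq (b : ι → ℂ) :
    sklyaninDensity ℏ A b ^ 2 =
      ∏ s ∈ A, ∏ t ∈ A.erase s, (Complex.Gamma ((b s - b t) / (Complex.I * ℏ)))⁻¹ *
        (Complex.Gamma (-((b s - b t) / (Complex.I * ℏ))))⁻¹ := by
  have hswap : sklyaninDensity ℏ A b =
      ∏ s ∈ A, ∏ t ∈ A.erase s, (Complex.Gamma (-((b s - b t) / (Complex.I * ℏ))))⁻¹ := by
    rw [sklyaninDensity, prod_comm' (t' := A) (s' := A.erase) (by grind)]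
    simp_rw [← neg_div, neg_sub]
  simp_rw [prod_mul_distrib]
  rw [sq, ← hswap, sklyaninDensity]

/-- The reflection formula controls the factors at `(s, t)` and `(t, s)` together, hence the square
of the density. -/
theorem isBigO_sklyaninDensity (hℏ : 0 < ℏ) (hb : ∀ ω, ∀ i ∈ A, (b ω i).im = q i) (hδ : 0 < δ) :
    (fun ω => sklyaninDensity ℏ A (b ω)) =O[l] fun ω => Real.exp
      ((Real.pi / 2 + δ) * pairEnergy A A (fun i => (b ω i).re) (fun i => (b ω i).re) / ℏ) := by
  have hterm : ∀ s ∈ A, ∀ t ∈ A.erase s,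
      (fun ω => (Complex.Gamma ((b ω s - b ω t) / (Complex.I * ℏ)))⁻¹ *
        (Complex.Gamma (-((b ω s - b ω t) / (Complex.I * ℏ))))⁻¹) =O[l]
      fun ω => Real.exp ((Real.pi + 2 * δ) * |(b ω s).re - (b ω t).re| / ℏ) := by
    intro s hs t ht
    have hre (ω : Ω) : ((b ω s - b ω t) / (Complex.I * ℏ)).re = (q s - q t) / ℏ := by
      rw [div_I_mul_re, Complex.sub_im, hb ω s hs, hb ω t (mem_of_mem_erase ht)]
    refine (isBigO_inv_Gamma_mul_inv_Gamma_neg hre (mul_pos two_pos hδ)).congr_right fun ω => ?_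
    rw [abs_div_I_mul_im hℏ, Complex.sub_re, mul_div_assoc]
  refine IsBigO.of_pow two_ne_zero ?_
  refine (IsBigO.finsetProd fun s hs => IsBigO.finsetProd (hterm s hs)).congr
    (fun ω => (sklyaninDensity_sq (b ω)).symm) fun ω => ?_
  have herase (s : ι) : ∑ t ∈ A.erase s, |(b ω s).re - (b ω t).re| =
      ∑ t ∈ A, |(b ω s).re - (b ω t).re| := sum_erase A (by simp)
  simp only [← Real.exp_sum, ← sum_div, ← mul_sum, herase, Pi.pow_apply, ← Real.exp_nat_mul,
    pairEnergy]
  congr 1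
  push_cast
  ring

end Growth

section GelfandZetlinFamily

variable {Ω : Type*} {l : Filter Ω} {N : ℕ} {γ : Ω → GZ} {η : ℕ → ℕ → ℝ}

/-- The contour of each row of the Gelfand–Zetlin array lies strictly above that of the next row,
so that the arguments of the numerator Gamma factors have positive real part. -/
def ContoursSeparated (N : ℕ) (η : ℕ → ℕ → ℝ) : Prop :=
  ∀ m < N, ∀ j ∈ Icc 1 m, ∀ k ∈ Icc 1 (m + 1), η (m + 1) k < η m j

lemma isBigO_levelFactor (hℏ : 0 < ℏ) (hη : ContoursSeparated N η)
    (hγ : ∀ ω, ∀ m ≤ N, ∀ j ∈ Icc 1 m, (γ ω m j).im = η m j) {m : ℕ} (hm : m < N) (y : ℝ)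
    {δ : ℝ} (hδ : 0 < δ) (hδ' : δ < Real.pi) :
    (fun ω => levelFactor ℏ m y (γ ω (m + 1)) (γ ω m)) =O[l] fun ω => Real.exp
      ((-(Real.pi / 2 - δ) * crossEnergy (fun m j => (γ ω m j).re) m +
        (Real.pi / 2 + δ) * selfEnergy (fun m j => (γ ω m j).re) m) / ℏ) := by
  have hlow ω := hγ ω m hm.le
  have hhigh ω := hγ ω (m + 1) hm
  have hphase : (fun ω => Complex.exp ((Complex.I / (ℏ : ℂ)) *
      ((∑ j ∈ Icc 1 (m + 1), γ ω (m + 1) j) - ∑ k ∈ Icc 1 m, γ ω m k) * y)) =O[l]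
      fun _ => (1 : ℝ) := by
    refine .of_bound (Real.exp (-((∑ j ∈ Icc 1 (m + 1), η (m + 1) j) - ∑ k ∈ Icc 1 m, η m k)
      / ℏ * y)) (.of_forall fun ω => ?_)
    rw [norm_one, mul_one, Complex.norm_exp, Complex.re_mul_ofReal, div_mul_eq_mul_div,
      Complex.div_ofReal_re, Complex.I_mul_re, Complex.sub_im, Complex.im_sum, Complex.im_sum,
      sum_congr rfl (hhigh ω), sum_congr rfl (hlow ω)]
  refine (((isBigO_sklyaninDensity hℏ hlow hδ).mul
    (isBigO_barnesKernel hℏ hhigh hlow (hη m hm) hδ hδ')).mul hphase).congr_right fun ω => ?_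
  rw [mul_one, ← Real.exp_add, crossEnergy, selfEnergy, ← add_div, add_comm]

theorem isBigO_todaIntegrand (hℏ : 0 < ℏ) (hη : ContoursSeparated N η)
    (hγ : ∀ ω, ∀ m ≤ N, ∀ j ∈ Icc 1 m, (γ ω m j).im = η m j) {R : ℝ} (hR : 0 ≤ R)
    (htop : ∀ ω, ∀ k ∈ Icc 1 N, |(γ ω N k).re| ≤ R) (x : ℕ → ℝ) :
    (fun ω => todaIntegrand ℏ N x (γ ω)) =O[l]
      fun ω => Real.exp (-(netEnergy (fun m j => (γ ω m j).re) N / ℏ)) := by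
  obtain ⟨δ, hδ, hδ', henergy⟩ := exists_weighted_energy_le N hR
  simp_rw [todaIntegrand_eq_prod]
  refine (IsBigO.finsetProd fun m hm =>
    isBigO_levelFactor hℏ hη hγ (mem_range.mp hm) (x (m + 1)) hδ hδ').trans ?_
  refine .of_bound (Real.exp (R / ℏ)) (.of_forall fun ω => ?_)
  rw [← Real.exp_sum, ← sum_div, Real.norm_of_nonneg (Real.exp_pos _).le,
    Real.norm_of_nonneg (Real.exp_pos _).le, ← Real.exp_add, ← sub_eq_add_neg, ← sub_div]
  gcongr
  exact henergy _ (htop ω)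

lemma continuous_Gamma_of_re_pos [TopologicalSpace Ω] {z : Ω → ℂ} (hz : Continuous z)
    (hre : ∀ ω, 0 < (z ω).re) : Continuous fun ω => Complex.Gamma (z ω) := by
  refine continuous_iff_continuousAt.mpr fun ω => (Complex.continuousAt_Gamma _ ?_).comp
    hz.continuousAt
  intro k hk
  have := hk ▸ hre ω
  simp only [Complex.neg_re, Complex.natCast_re] at this
  linarith [k.cast_nonneg (α := ℝ)]

lemma continuous_levelFactor [TopologicalSpace Ω] (hℏ : 0 < ℏ) {m : ℕ} (y : ℝ) {a b : Ω → ℕ → ℂ}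
    (ha : ∀ j, Continuous fun ω => a ω j) (hb : ∀ j, Continuous fun ω => b ω j)
    (hab : ∀ ω, ∀ k ∈ Icc 1 m, ∀ j ∈ Icc 1 (m + 1), (a ω j).im < (b ω k).im) :
    Continuous fun ω => levelFactor ℏ m y (a ω) (b ω) := by
  have hinv : Continuous fun s : ℂ => (Complex.Gamma s)⁻¹ :=
    Complex.differentiable_one_div_Gamma.continuous
  refine Continuous.mul (Continuous.mul ?_ ?_) (by fun_prop)
  · exact continuous_finsetProd _ fun s _ => continuous_finsetProd _ fun t _ =>
      hinv.comp (((hb s).sub (hb t)).div_const _)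
  · refine continuous_finsetProd _ fun k hk => continuous_finsetProd _ fun j hj => ?_
    have hdiff : Continuous fun ω => (b ω k - a ω j) / (Complex.I * ℏ) :=
      ((hb k).sub (ha j)).div_const _
    refine Continuous.mul (by unfold hpow; fun_prop) (continuous_Gamma_of_re_pos hdiff fun ω => ?_)
    rw [div_I_mul_re, Complex.sub_im]
    exact div_pos (sub_pos.mpr (hab ω k hk j hj)) hℏ

lemma continuous_todaIntegrand [TopologicalSpace Ω] (hℏ : 0 < ℏ) (hη : ContoursSeparated N η)
    (hγ : ∀ ω, ∀ m ≤ N, ∀ j ∈ Icc 1 m, (γ ω m j).im = η m j)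
    (hcont : ∀ m j, Continuous fun ω => γ ω m j) (x : ℕ → ℝ) :
    Continuous fun ω => todaIntegrand ℏ N x (γ ω) := by
  simp_rw [todaIntegrand_eq_prod]
  refine continuous_finsetProd _ fun m hm =>
    continuous_levelFactor hℏ _ (hcont (m + 1)) (hcont m) fun ω k hk j hj => ?_
  have hm := mem_range.mp hm
  rw [hγ ω (m + 1) hm j hj, hγ ω m hm.le k hk]
  exact hη m hm k hk j hj

end GelfandZetlinFamily

end LevelFactor

section Tube

variable {N : ℕ} {g : ℕ → ℂ} {η : ℕ → ℕ → ℝ}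

lemma gzTube_top (N : ℕ) (g : ℕ → ℂ) (η : ℕ → ℕ → ℝ) (ξ : GZIdx N → ℝ) : gzTube N g η ξ N = g := by
  funext j
  simp [gzTube]

lemma gzTube_apply_idx (ξ : GZIdx N → ℝ) (i : GZIdx N) :
    gzTube N g η ξ i.1.1 i.1.2 = ξ i + Complex.I * η i.1.1 i.1.2 :=
  dif_pos ⟨i.2.1, i.2.2, i.1.1.2⟩

lemma gzTube_im (hg : ∀ k ∈ Icc 1 N, η N k = (g k).im) (ξ : GZIdx N → ℝ) {m j : ℕ} (hm : m ≤ N)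
    (hj : j ∈ Icc 1 m) : (gzTube N g η ξ m j).im = η m j := by
  rcases hm.eq_or_lt with rfl | hm
  · rw [gzTube_top, hg j hj]
  · obtain ⟨hj, hjm⟩ := mem_Icc.mp hj
    rw [gzTube, dif_pos ⟨hj, hjm, hm⟩]
    simp

lemma continuous_gzTube (m j : ℕ) : Continuous fun ξ : GZIdx N → ℝ => gzTube N g η ξ m j := by
  unfold gzTube
  split_ifs <;> fun_prop

lemma norm_le_add_half_netEnergy_gzTube {R : ℝ} (hR : 0 ≤ R) (hg : ∀ k ∈ Icc 1 N, |(g k).re| ≤ R)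
    (ξ : GZIdx N → ℝ) :
    ‖ξ‖ ≤ R + netEnergy (fun m j => (gzTube N g η ξ m j).re) N / 2 := by
  have hnet := netEnergy_nonneg (fun m j => (gzTube N g η ξ m j).re) N
  refine (pi_norm_le_iff_of_nonneg (by linarith)).mpr fun i => ?_
  have hξ : ξ i = (gzTube N g η ξ i.1.1 i.1.2).re := by simp [gzTube_apply_idx]
  rw [Real.norm_eq_abs, hξ]
  exact abs_le_add_half_netEnergy (X := fun m j => (gzTube N g η ξ m j).re)
    (by simpa [gzTube_top] using hg) i.1.1.2.le (mem_Icc.mpr i.2)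

theorem integrable_todaIntegrand {ℏ : ℝ} (hℏ : 0 < ℏ) (hη : ContoursSeparated N η)
    (hg : ∀ k ∈ Icc 1 N, η N k = (g k).im) (x : ℕ → ℝ) :
    Integrable fun ξ : GZIdx N → ℝ => todaIntegrand ℏ N x (gzTube N g η ξ) := by
  set R : ℝ := ∑ k ∈ Icc 1 N, |(g k).re|
  have hR : 0 ≤ R := sum_nonneg fun _ _ => abs_nonneg _
  have hgR : ∀ k ∈ Icc 1 N, |(g k).re| ≤ R := fun k hk =>
    single_le_sum (f := fun k => |(g k).re|) (fun _ _ => abs_nonneg _) hk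
  have him (ξ : GZIdx N → ℝ) (m : ℕ) (hm : m ≤ N) (j : ℕ) (hj : j ∈ Icc 1 m) :=
    gzTube_im hg ξ hm hj
  have hbound : (fun ξ : GZIdx N → ℝ => todaIntegrand ℏ N x (gzTube N g η ξ)) =O[⊤]
      fun ξ => Real.exp (-(2 / ℏ) * ‖ξ‖) := by
    refine (isBigO_todaIntegrand hℏ hη him hR (by simpa [gzTube_top] using hgR) x).trans ?_
    refine .of_bound (Real.exp (2 * R / ℏ)) (.of_forall fun ξ => ?_)
    rw [Real.norm_of_nonneg (Real.exp_pos _).le, Real.norm_of_nonneg (Real.exp_pos _).le,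
      ← Real.exp_add, ← neg_div, neg_mul, div_mul_eq_mul_div, ← sub_eq_add_neg, ← sub_div]
    gcongr
    linarith [norm_le_add_half_netEnergy_gzTube (η := η) hR hgR ξ]
  have hcont := continuous_todaIntegrand hℏ hη him continuous_gzTube x
  rw [← integrableAtFilter_top]
  exact hbound.integrableAtFilter hcont.aestronglyMeasurable.stronglyMeasurableAtFilter
    (integrableAtFilter_top.mpr (integrable_exp_neg_mul_norm volume (by positivity)))

end Tube

section Recursion

lemma integral_pi_eq_integral_integral_sumElim {ι κ τ : Type*} [Fintype ι] [Fintype κ] [Fintype τ]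
    {E : Type*} [NormedAddCommGroup E] [NormedSpace ℝ E] (e : ι ⊕ κ ≃ τ) {F : (τ → ℝ) → E}
    (hF : Integrable F) :
    ∫ ξ, F ξ = ∫ ζ : ι → ℝ, ∫ ξ : κ → ℝ, F (Sum.elim ζ ξ ∘ e.symm) := by
  have hmp := (volume_preserving_arrowCongr' e (.refl ℝ) (.id volume)).comp
    (volume_measurePreserving_sumPiEquivProdPi_symm fun _ : ι ⊕ κ => ℝ)
  have hemb := (MeasurableEquiv.arrowCongr' e (.refl ℝ)).measurableEmbedding.comp
    (MeasurableEquiv.sumPiEquivProdPi fun _ : ι ⊕ κ => ℝ).symm.measurableEmbedding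
  rw [← hmp.integral_comp hemb, Measure.volume_eq_prod]
  exact integral_prod _ ((hmp.integrable_comp_emb hemb).mpr hF)

variable {m : ℕ}

/-- The row `(ζ_k + i y_k)_{k ≥ 1}` of contour points; the coordinate `ζ_k` is stored at position
`k - 1` and read as `0` beyond the length of `ζ`. -/
def contourRow (y : ℕ → ℝ) (ζ : Fin m → ℝ) : ℕ → ℂ := fun k =>
  (if h : k - 1 < m then (ζ ⟨k - 1, h⟩ : ℂ) else 0) + Complex.I * (y k : ℂ)

/-- The inclusion into the variables below level `m + 1` of those of level `m` and of those below
level `m`. -/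
def gzIdxOfSum : Fin m ⊕ GZIdx m → GZIdx (m + 1) :=
  Sum.elim (fun i => ⟨(Fin.last m, i.succ), by simp, by simp⟩)
    (fun i => ⟨(i.1.1.castSucc, i.1.2.castSucc), i.2⟩)

lemma gzIdxOfSum_bijective : Function.Bijective (gzIdxOfSum (m := m)) := by
  constructor
  · refine Function.Injective.sumElim (fun i i' h => ?_) (fun i i' h => ?_) fun i i' h => ?_
    · simpa using h
    · simpa [Subtype.ext_iff, Prod.ext_iff] using h
    · exact (Fin.castSucc_ne_last i'.1.1) (congrArg (fun k => k.1.1) h).symm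
  · rintro ⟨⟨r, j⟩, hj, hjr⟩
    rcases r.eq_castSucc_or_eq_last with ⟨r, rfl⟩ | rfl
    · exact ⟨.inr ⟨(r, ⟨j, hjr.trans_lt r.2⟩), hj, hjr⟩, rfl⟩
    · obtain ⟨i, rfl⟩ := Fin.exists_succ_eq.mpr (show j ≠ 0 from fun h => by simp [h] at hj)
      exact ⟨.inl i, rfl⟩

/-- The variables below level `m + 1` split into those of level `m` and those below level `m`. -/
def gzIdxSuccEquiv (m : ℕ) : Fin m ⊕ GZIdx m ≃ GZIdx (m + 1) :=
  .ofBijective gzIdxOfSum gzIdxOfSum_bijective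

lemma gzTube_succ_apply_gzIdxOfSum (g : ℕ → ℂ) (η : ℕ → ℕ → ℝ) (ζ : Fin m → ℝ) (ξ : GZIdx m → ℝ)
    (i : Fin m ⊕ GZIdx m) :
    gzTube (m + 1) g η (Sum.elim ζ ξ ∘ (gzIdxSuccEquiv m).symm) (gzIdxOfSum i).1.1
        (gzIdxOfSum i).1.2 =
      Sum.elim ζ ξ i + Complex.I * η (gzIdxOfSum i).1.1 (gzIdxOfSum i).1.2 := by
  rw [gzTube_apply_idx, Function.comp_apply, gzIdxSuccEquiv, Equiv.ofBijective_symm_apply_apply]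

lemma gzTube_succ_eq_gzTube (g : ℕ → ℂ) (η : ℕ → ℕ → ℝ) (ζ : Fin m → ℝ) (ξ : GZIdx m → ℝ)
    {r j : ℕ} (hr : r ≤ m) (hj : j ∈ Icc 1 r) :
    gzTube (m + 1) g η (Sum.elim ζ ξ ∘ (gzIdxSuccEquiv m).symm) r j =
      gzTube m (contourRow (η m) ζ) η ξ r j := by
  obtain ⟨hj, hjr⟩ := mem_Icc.mp hj
  rcases hr.lt_or_eq with hr | rfl
  · let i : GZIdx m := ⟨(⟨r, hr⟩, ⟨j, hjr.trans_lt hr⟩), hj, hjr⟩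
    exact (gzTube_succ_apply_gzIdxOfSum g η ζ ξ (.inr i)).trans (gzTube_apply_idx ξ i).symm
  · obtain ⟨i, rfl⟩ : ∃ i, j = i + 1 := ⟨j - 1, by omega⟩
    rw [gzTube_top, contourRow, dif_pos (by simpa using hjr)]
    exact gzTube_succ_apply_gzIdxOfSum g η ζ ξ (.inl ⟨i, hjr⟩)

lemma todaIntegrand_succ_gzTube (ℏ : ℝ) (x : ℕ → ℝ) (g : ℕ → ℂ) (η : ℕ → ℕ → ℝ) (ζ : Fin m → ℝ)
    (ξ : GZIdx m → ℝ) :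
    todaIntegrand ℏ (m + 1) x
        (gzTube (m + 1) g η (Sum.elim ζ ξ ∘ (gzIdxSuccEquiv m).symm)) =
      levelFactor ℏ m (x (m + 1)) g (contourRow (η m) ζ) *
        todaIntegrand ℏ m x (gzTube m (contourRow (η m) ζ) η ξ) := by
  have hlow (r : ℕ) (hr : r ≤ m) (j : ℕ) (hj : j ∈ Icc 1 r) :=
    gzTube_succ_eq_gzTube g η ζ ξ hr hj
  rw [todaIntegrand_succ, todaIntegrand_congr ℏ x hlow, gzTube_top,
    levelFactor_congr ℏ _ (fun _ _ => rfl) (hlow m le_rfl), gzTube_top]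

end Recursion

/-- the Gelfand–Zetlin recursion for the Mellin–Barnes wave
functions: `ψ_{γ_n}(x_1,…,x_n)` is obtained from `ψ_{γ_{n−1}}(x_1,…,x_{n−1})` by
integrating against `μ^{(n−1)}(γ_{n−1})·f_n(γ_n,γ_{n−1})·e^{(i/ℏ)(Σγ_n − Σγ_{n−1})x_n}`
over the contour `Im γ_{n−1,k} = η_{n−1,k}`. -/
theorem toda_wave_function_recursion (ℏ : ℝ) (hℏ : 0 < ℏ) (n : ℕ) (hn : 2 ≤ n)
    (γn : ℕ → ℂ) (η : ℕ → ℕ → ℝ)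
    (hηtop : ∀ k, η n k = (γn k).im)
    (hη : ∀ m : ℕ, 1 ≤ m → m ≤ n - 1 → ∀ j ∈ Icc 1 m, ∀ k ∈ Icc 1 (m + 1),
      η (m + 1) k < η m j)
    (x : ℕ → ℝ) :
    psiMB ℏ η n γn x =
      ∫ ζ : Fin (n - 1) → ℝ,
        (∏ s ∈ Icc 1 (n - 1), ∏ t ∈ (Icc 1 (n - 1)).erase s,
          (Complex.Gamma
            ((((if h : s - 1 < n - 1 then (ζ ⟨s - 1, h⟩ : ℂ) else 0) + Complex.I * (η (n - 1) s : ℂ)) -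
              ((if h : t - 1 < n - 1 then (ζ ⟨t - 1, h⟩ : ℂ) else 0) + Complex.I * (η (n - 1) t : ℂ))) /
              (Complex.I * ℏ)))⁻¹) *
        (∏ k ∈ Icc 1 (n - 1), ∏ m ∈ Icc 1 n,
          hpow ℏ ((((if h : k - 1 < n - 1 then (ζ ⟨k - 1, h⟩ : ℂ) else 0) +
              Complex.I * (η (n - 1) k : ℂ)) - γn m) / (Complex.I * ℏ)) *
            Complex.Gamma ((((if h : k - 1 < n - 1 then (ζ ⟨k - 1, h⟩ : ℂ) else 0) +
              Complex.I * (η (n - 1) k : ℂ)) - γn m) / (Complex.I * ℏ))) *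
        Complex.exp ((Complex.I / (ℏ : ℂ)) *
          ((∑ j ∈ Icc 1 n, γn j) - ∑ k ∈ Icc 1 (n - 1),
            ((if h : k - 1 < n - 1 then (ζ ⟨k - 1, h⟩ : ℂ) else 0) +
              Complex.I * (η (n - 1) k : ℂ))) * (x n : ℂ)) *
        psiMB ℏ η (n - 1)
          (fun k => (if h : k - 1 < n - 1 then (ζ ⟨k - 1, h⟩ : ℂ) else 0) +
            Complex.I * (η (n - 1) k : ℂ)) x := by
  obtain ⟨m, rfl⟩ : ∃ m, n = m + 1 := ⟨n - 1, by omega⟩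
  have hsep : ContoursSeparated (m + 1) η := fun r hr j hj =>
    hη r ((mem_Icc.mp hj).1.trans (mem_Icc.mp hj).2) (Nat.le_of_lt_succ hr) j hj
  calc psiMB ℏ η (m + 1) γn x
    _ = ∫ ζ : Fin m → ℝ, ∫ ξ : GZIdx m → ℝ, todaIntegrand ℏ (m + 1) x
          (gzTube (m + 1) γn η (Sum.elim ζ ξ ∘ (gzIdxSuccEquiv m).symm)) :=
        integral_pi_eq_integral_integral_sumElim (gzIdxSuccEquiv m)
          (integrable_todaIntegrand hℏ hsep (fun k _ => hηtop k) x)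
    _ = ∫ ζ : Fin m → ℝ, levelFactor ℏ m (x (m + 1)) γn (contourRow (η m) ζ) *
          psiMB ℏ η m (contourRow (η m) ζ) x := by
        simp_rw [todaIntegrand_succ_gzTube, integral_const_mul, psiMB]
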